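/- arXiv:1504.06105 — 3 statements merged into one kernel-verified Lean document; each statement's English description precedes it below -/
import Mathlib

section
/- For every word u ∈ List ℚ and every m ∈ ℕ, the insertion of an m-gap at u commutes with longest common prefixes: for all words w, v one has ι_u^m(w ⊓ v) = ι_u^m(w) ⊓ ι_u^m(v). -/
/-!
Induction on `u`, peeling off first letters. For `u = ε` the insertion prepends a fixed block
of zeros to both words, which extends their common prefix by that block
(`lcp_append_append_left`). For `u = a :: t`, the insertion keeps the first letter of a word and
acts on its tail as the insertion at `t` if that letter is `a`, and as the identity otherwise
(`iota_cons_cons`). Hence two words with distinct first letters keep the common prefix `ε`, and for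
words with equal first letters the same map acts on both tails.
-/

namespace CLTL

/-- A word is a finite sequence of rationals. -/
abbrev Word := List ℚ

/-- Lexicographic order on lists over a linear order: `w ⊑ v` iff `w` is a prefix of `v`,
or they branch at some position with the letter of `w` smaller. -/
def lexLe {α : Type*} [LinearOrder α] (w v : List α) : Prop :=
  w <+: v ∨ ∃ (p : List α) (a b : α), a < b ∧ (p ++ [a]) <+: w ∧ (p ++ [b]) <+: v

/-- Longest common prefix of two lists. -/
def lcp {α : Type*} [DecidableEq α] : List α → List α → List α
  | a :: w, b :: v => if a = b then a :: lcp w v else []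
  | _, _ => []

/-- Iterated longest common prefix of a nonempty list of words. -/
def listLCP : List Word → Word
  | [] => []
  | [x] => x
  | x :: xs => lcp x (listLCP xs)

/-- Insertion of an `m`-gap at `u`. -/
def iota (u : Word) (m : ℕ) (w : Word) : Word :=
  if u <+: w then u ++ List.replicate m 0 ++ w.drop u.length else w

/-- The maximal common ancestor tree of a tuple `w` together with constants `C`:
`{ε}` together with all iterated longest common prefixes of nonempty subsets of entries. -/
def MCAT (C : List Word) {k : ℕ} (w : Fin k → Word) : Set Word :=
  insert [] { x | ∃ I : Finset (Fin (k + C.length)),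
    I.Nonempty ∧ x = listLCP (I.toList.map (Fin.append w C.get)) }

/-- `h` is the induced isomorphism witnessing `typ_C(w) = typ_C(v)`. -/
def IsInducedIso (C : List Word) {k : ℕ} (w v : Fin k → Word) (h : Word → Word) : Prop :=
  Set.BijOn h (MCAT C w) (MCAT C v) ∧
  (∀ x ∈ MCAT C w, ∀ y ∈ MCAT C w,
    (x <+: y ↔ h x <+: h y) ∧ (lexLe x y ↔ lexLe (h x) (h y))) ∧
  (∀ c ∈ C, h c = c) ∧
  (∀ i : Fin k, h (w i) = v i)

/-- `typ_C(w) = typ_C(v)`. -/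
def SameTyp (C : List Word) {k : ℕ} (w v : Fin k → Word) : Prop :=
  ∃ h : Word → Word, IsInducedIso C w v h

/-- The stretching condition on an isomorphism `h` of `MCAT_C(w)`:
`|h e| - |h d| ≥ |e| - |d|` whenever `d` is a proper prefix of `e`. -/
def StretchCond (C : List Word) {k : ℕ} (w : Fin k → Word) (h : Word → Word) : Prop :=
  ∀ d ∈ MCAT C w, ∀ e ∈ MCAT C w, d <+: e → d ≠ e →
    e.length + (h d).length ≤ (h e).length + d.length

/-- `w ≼* v` for tuples of words. -/
def Stretch (C : List Word) {k : ℕ} (w v : Fin k → Word) : Prop :=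
  ∃ h : Word → Word, IsInducedIso C w v h ∧ StretchCond C w h

/-- `≼*` on configurations. -/
def ConfigLe (C : List Word) {Q : Type*} {n : ℕ}
    (c d : Q × (Fin n → Word)) : Prop :=
  c.1 = d.1 ∧ Stretch C c.2 d.2

/-- A transition relation is type-invariant. -/
def TypeInvariant (C : List Word) {Q : Type*} {n : ℕ}
    (step : (Q × (Fin n → Word)) → (Q × (Fin n → Word)) → Prop) : Prop :=
  ∀ (q p : Q) (w v w' v' : Fin n → Word),
    step (q, w) (p, v) → SameTyp C (Fin.append w v) (Fin.append w' v') →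
      step (q, w') (p, v')

/-- Finite runs, indexed by `Fin (N+1)`. -/
def IsFinRun {Q : Type*} {n : ℕ}
    (step : (Q × (Fin n → Word)) → (Q × (Fin n → Word)) → Prop)
    {N : ℕ} (r : Fin (N + 1) → Q × (Fin n → Word)) : Prop :=
  ∀ i : Fin N, step (r i.castSucc) (r i.succ)

/-- Infinite runs. -/
def IsInfRun {Q : Type*} {n : ℕ}
    (step : (Q × (Fin n → Word)) → (Q × (Fin n → Word)) → Prop)
    (r : ℕ → Q × (Fin n → Word)) : Prop :=
  ∀ i : ℕ, step (r i) (r (i + 1))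

/-- The pair `(w, v)` (of tuples of equal type) is contracting. -/
def ContractingPair (C : List Word) {k : ℕ} (w v : Fin k → Word) : Prop :=
  ∃ h : Word → Word, IsInducedIso C w v h ∧
    ((∃ d ∈ MCAT C w, h d <+: d ∧ h d ≠ d) ∨
     (∃ d ∈ MCAT C w, ∃ e ∈ MCAT C w,
        d <+: e ∧ d ≠ e ∧ h e = e ∧ d <+: h d ∧ d ≠ h d))

/-- A set of words `T` has `n`-gaps above `B`. -/
def HasGaps (n : ℕ) (T B : Set Word) : Prop :=
  ∀ d ∈ T, ∀ e ∈ T, d <+: e → d ≠ e → (∀ b ∈ B, ¬ e <+: b) → n + d.length < e.length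

lemma lcp_append_append_left {α : Type*} [DecidableEq α] (p x y : List α) :
    lcp (p ++ x) (p ++ y) = p ++ lcp x y := by
  induction p with
  | nil => rfl
  | cons a p ih => simp [lcp, ih]

lemma iota_nil (m : ℕ) (w : Word) : iota [] m w = List.replicate m 0 ++ w := by
  simp [iota]

lemma iota_cons_nil (a : ℚ) (u : Word) (m : ℕ) : iota (a :: u) m [] = [] := by
  simp [iota]

lemma iota_cons_cons (a b : ℚ) (u : Word) (m : ℕ) (w : Word) :
    iota (a :: u) m (b :: w) = b :: (if a = b then iota u m w else w) := by
  by_cases hab : a = b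
  · subst hab
    by_cases hu : u <+: w <;> simp [iota, hu, List.cons_prefix_cons]
  · simp [iota, hab, List.cons_prefix_cons]

/-- Insertion of an `m`-gap at `u` commutes with longest common prefixes. -/
theorem stmt1 (u : Word) (m : ℕ) (w v : Word) :
    iota u m (lcp w v) = lcp (iota u m w) (iota u m v) := by
  induction u generalizing w v with
  | nil => simp only [iota_nil, lcp_append_append_left]
  | cons a u ih =>
    cases w with
    | nil => simp [iota_cons_nil, lcp]
    | cons b w =>
      cases v with
      | nil => simp [iota_cons_nil, lcp]
      | cons c v =>
        by_cases hbc : b = c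
        · subst hbc
          by_cases hab : a = b <;> simp [lcp, iota_cons_cons, hab, ih]
        · simp [lcp, iota_cons_cons, iota_cons_nil, hbc]

end CLTL
end

section
/- For all tuples w̄, v̄ of words of the same length with typ_C(w̄) = typ_C(v̄), there exists a tuple ū of the same length such that w̄ ≼* ū and v̄ ≼* ū. -/
/-!
The upper bound is a padded copy of `w`. Fix `N` at least as large as every length occurring in
`MCAT C v`, and let `pad` (`padFrom f []` below) rewrite a word letter by letter, inserting `N`
zeros after every letter that completes a prefix outside `C`. Two words that branch after a common
prefix `p` are mapped to words that branch after the padded `p`, with the same two letters. Hence `pad` preserves and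
reflects prefixes (`padFrom_prefix_iff`) and the lexicographic order (`padFrom_lexLe_iff`), and it
commutes with longest common prefixes (`padFrom_lcp`), so it maps `MCAT C w` onto the `MCAT` of the
padded tuple. Constants are fixed because `C` is prefix closed.

The padding only increases distances, so `w` is below the padded tuple. For `v` one composes with
the inverse of the given isomorphism `h`. If `e` is a constant, then so is every prefix of `e`,
and nothing moves; otherwise the `N` zeros at the end of the padded `e` already outweigh the length
of `h e`.
-/

namespace CLTL

/-- Pads `x`, read as the continuation of a word `p` already processed: after each letter, `f q`
zeros are inserted, where `q` is the prefix of `p ++ x` completed by that letter. -/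
def padFrom (f : Word → ℕ) : Word → Word → Word
  | _, [] => []
  | p, a :: x => a :: (List.replicate (f (p ++ [a])) 0 ++ padFrom f (p ++ [a]) x)

theorem padFrom_append (f : Word → ℕ) (p x y : Word) :
    padFrom f p (x ++ y) = padFrom f p x ++ padFrom f (p ++ x) y := by
  induction x generalizing p with
  | nil => simp [padFrom]
  | cons a x ih => simp [padFrom, ih]

theorem padFrom_prefix_iff (f : Word → ℕ) (p x y : Word) :
    padFrom f p x <+: padFrom f p y ↔ x <+: y := by
  induction x generalizing p y with
  | nil => simp [padFrom]
  | cons a x ih =>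
    cases y with
    | nil => simp [padFrom]
    | cons b y =>
      simp only [padFrom, List.cons_prefix_cons]
      refine and_congr_right ?_
      rintro rfl
      rw [List.prefix_append_right_inj, ih]

theorem padFrom_injective (f : Word → ℕ) (p : Word) : Function.Injective (padFrom f p) := by
  intro x y hxy
  have h1 := (padFrom_prefix_iff f p x y).1 (hxy ▸ List.prefix_rfl)
  have h2 := (padFrom_prefix_iff f p y x).1 (hxy ▸ List.prefix_rfl)
  exact h1.eq_of_length_le h2.length_le

theorem lexLe_cons_cons (a b : ℚ) (x y : Word) :
    lexLe (a :: x) (b :: y) ↔ a < b ∨ a = b ∧ lexLe x y := by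
  constructor
  · rintro (h | ⟨p, c, d, hcd, h1, h2⟩)
    · rw [List.cons_prefix_cons] at h
      exact Or.inr ⟨h.1, Or.inl h.2⟩
    · cases p with
      | nil =>
        simp only [List.nil_append, List.cons_prefix_cons] at h1 h2
        left
        rw [← h1.1, ← h2.1]
        exact hcd
      | cons e p =>
        simp only [List.cons_append, List.cons_prefix_cons] at h1 h2
        exact Or.inr ⟨h1.1.symm.trans h2.1, Or.inr ⟨p, c, d, hcd, h1.2, h2.2⟩⟩
  · rintro (h | ⟨rfl, h | ⟨p, c, d, hcd, h1, h2⟩⟩)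
    · exact Or.inr ⟨[], a, b, h, by simp, by simp⟩
    · exact Or.inl (by simpa using h)
    · exact Or.inr ⟨a :: p, c, d, hcd, by simpa using h1, by simpa using h2⟩

theorem lexLe_append_left (r x y : Word) : lexLe (r ++ x) (r ++ y) ↔ lexLe x y := by
  induction r with
  | nil => simp
  | cons a r ih => simp [lexLe_cons_cons, ih]

theorem padFrom_lexLe_iff (f : Word → ℕ) (p x y : Word) :
    lexLe (padFrom f p x) (padFrom f p y) ↔ lexLe x y := by
  induction x generalizing p y with
  | nil => simp [padFrom, lexLe]
  | cons a x ih =>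
    cases y with
    | nil => simp [padFrom, lexLe]
    | cons b y =>
      simp only [padFrom, lexLe_cons_cons]
      refine or_congr_right (and_congr_right ?_)
      rintro rfl
      rw [lexLe_append_left, ih]

theorem lcp_append_left (r x y : Word) : lcp (r ++ x) (r ++ y) = r ++ lcp x y := by
  induction r with
  | nil => simp
  | cons a r ih => simp [lcp, ih]

theorem padFrom_lcp (f : Word → ℕ) (p x y : Word) :
    lcp (padFrom f p x) (padFrom f p y) = padFrom f p (lcp x y) := by
  induction x generalizing p y with
  | nil => simp [padFrom, lcp]
  | cons a x ih =>
    cases y with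
    | nil => simp [padFrom, lcp]
    | cons b y =>
      by_cases hab : a = b
      · subst hab
        simp [padFrom, lcp, lcp_append_left, ih]
      · simp [padFrom, lcp, hab]

theorem padFrom_listLCP (f : Word → ℕ) (l : List Word) :
    listLCP (l.map (padFrom f [])) = padFrom f [] (listLCP l) := by
  induction l with
  | nil => simp [listLCP, padFrom]
  | cons x l ih =>
    cases l with
    | nil => simp [listLCP]
    | cons y l =>
      simp only [List.map_cons, listLCP] at ih ⊢
      rw [ih, padFrom_lcp]

theorem length_le_padFrom (f : Word → ℕ) (p x : Word) : x.length ≤ (padFrom f p x).length := by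
  induction x generalizing p with
  | nil => simp
  | cons a x ih =>
    have := ih (p ++ [a])
    simp only [padFrom, List.length_cons, List.length_append]
    omega

/-- A continuation `x` of `p` is unchanged if no padding is requested at `p ++ q` for any prefix `q`
of `x`. -/
theorem padFrom_eq_self (f : Word → ℕ) (p x : Word)
    (hf : ∀ q, q <+: x → f (p ++ q) = 0) : padFrom f p x = x := by
  induction x generalizing p with
  | nil => rfl
  | cons a x ih =>
    have h0 : f (p ++ [a]) = 0 := hf [a] (by simp)
    have h1 := ih (p ++ [a]) fun q hq => by
      have := hf (a :: q) (by simpa using hq)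
      simpa using this
    simp [padFrom, h0, h1]

/-- The right-hand side counts, among others, the `f (p ++ x)` zeros inserted after the last letter
of `x`. -/
theorem le_length_padFrom (f : Word → ℕ) (p x : Word) (hx : x ≠ []) :
    f (p ++ x) ≤ (padFrom f p x).length := by
  obtain ⟨y, a, rfl⟩ : ∃ y a, x = y ++ [a] :=
    ⟨_, _, (List.dropLast_append_getLast hx).symm⟩
  rw [padFrom_append]
  simp [padFrom]
  omega

theorem mem_MCAT_entry (C : List Word) {k : ℕ} (w : Fin k → Word) (i : Fin (k + C.length)) :
    Fin.append w C.get i ∈ MCAT C w :=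
  Or.inr ⟨{i}, by simp, by simp [listLCP]⟩

theorem mem_MCAT_tuple (C : List Word) {k : ℕ} (w : Fin k → Word) (i : Fin k) :
    w i ∈ MCAT C w := by
  simpa using mem_MCAT_entry C w (Fin.castAdd _ i)

theorem mem_MCAT_const (C : List Word) {k : ℕ} (w : Fin k → Word) {c : Word} (hc : c ∈ C) :
    c ∈ MCAT C w := by
  obtain ⟨i, rfl⟩ := List.get_of_mem hc
  simpa using mem_MCAT_entry C w (Fin.natAdd k i)

theorem MCAT_finite (C : List Word) {k : ℕ} (w : Fin k → Word) : (MCAT C w).Finite := by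
  refine Set.Finite.insert _ ((Set.finite_range fun I : Finset (Fin (k + C.length)) =>
    listLCP (I.toList.map (Fin.append w C.get))).subset ?_)
  rintro x ⟨I, -, rfl⟩
  exact ⟨I, rfl⟩

theorem MCAT_pad (C : List Word) {k : ℕ} (w : Fin k → Word) (f : Word → ℕ)
    (hf : ∀ c ∈ C, padFrom f [] c = c) :
    MCAT C (fun i => padFrom f [] (w i)) = padFrom f [] '' MCAT C w := by
  have happ : Fin.append (fun i => padFrom f [] (w i)) C.get
      = padFrom f [] ∘ Fin.append w C.get := by
    funext i
    refine Fin.addCases (fun i => ?_) (fun i => ?_) i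
    · simp
    · simpa using (hf _ (List.getElem_mem i.2)).symm
  have hl (I : Finset (Fin (k + C.length))) :
      listLCP (I.toList.map (Fin.append (fun i => padFrom f [] (w i)) C.get))
        = padFrom f [] (listLCP (I.toList.map (Fin.append w C.get))) := by
    rw [happ, ← List.map_map, padFrom_listLCP]
  simp only [MCAT, hl, Set.image_insert_eq]
  congr 1
  ext x
  constructor
  · rintro ⟨I, hI, rfl⟩
    exact ⟨_, ⟨I, hI, rfl⟩, rfl⟩
  · rintro ⟨_, ⟨I, hI, rfl⟩, rfl⟩
    exact ⟨I, hI, rfl⟩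

theorem isInducedIso_pad (C : List Word) {k : ℕ} (w : Fin k → Word) (f : Word → ℕ)
    (hf : ∀ c ∈ C, padFrom f [] c = c) :
    IsInducedIso C w (fun i => padFrom f [] (w i)) (padFrom f []) := by
  refine ⟨?_, fun x _ y _ => ⟨(padFrom_prefix_iff f [] x y).symm,
    (padFrom_lexLe_iff f [] x y).symm⟩, hf, fun _ => rfl⟩
  rw [MCAT_pad C w f hf]
  exact (padFrom_injective f []).injOn.bijOn_image

theorem IsInducedIso.comp {C : List Word} {k : ℕ} {w v u : Fin k → Word} {g h : Word → Word}
    (hg : IsInducedIso C v u g) (hh : IsInducedIso C w v h) : IsInducedIso C w u (g ∘ h) := by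
  obtain ⟨b1, o1, c1, t1⟩ := hh
  obtain ⟨b2, o2, c2, t2⟩ := hg
  refine ⟨b2.comp b1, fun x hx y hy => ?_, fun c hc => ?_, fun i => ?_⟩
  · have h1 := o1 x hx y hy
    have h2 := o2 _ (b1.mapsTo hx) _ (b1.mapsTo hy)
    exact ⟨h1.1.trans h2.1, h1.2.trans h2.2⟩
  · simp [c1 c hc, c2 c hc]
  · simp [t1, t2]

theorem IsInducedIso.symm {C : List Word} {k : ℕ} {w v : Fin k → Word} {h : Word → Word}
    (hh : IsInducedIso C w v h) :
    ∃ g, IsInducedIso C v w g ∧ ∀ y ∈ MCAT C v, h (g y) = y := by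
  obtain ⟨b, o, c, t⟩ := hh
  have hinv := b.invOn_invFunOn
  refine ⟨Function.invFunOn h (MCAT C w), ⟨b.symm hinv.symm, fun x hx y hy => ?_,
    fun d hd => ?_, fun i => ?_⟩, hinv.2⟩
  · have hm := (b.symm hinv.symm).mapsTo
    have := o _ (hm hx) _ (hm hy)
    rw [hinv.2 hx, hinv.2 hy] at this
    exact ⟨this.1.symm, this.2.symm⟩
  · have := hinv.1 (mem_MCAT_const C w hd)
    rwa [c d hd] at this
  · have := hinv.1 (mem_MCAT_tuple C w i)
    rwa [t i] at this

/-- Any two tuples of the same type over `C` have a common `≼*`-upper bound. -/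
theorem stmt6 (C : List Word) (hC : ∀ c ∈ C, ∀ c' : Word, c' <+: c → c' ∈ C)
    {k : ℕ} (w v : Fin k → Word) (h : SameTyp C w v) :
    ∃ u : Fin k → Word, Stretch C w u ∧ Stretch C v u := by
  classical
  obtain ⟨h, hh⟩ := h
  obtain ⟨N, hN⟩ : ∃ N, ∀ x ∈ MCAT C v, x.length ≤ N := by
    obtain ⟨N, hN⟩ := ((MCAT_finite C v).image List.length).bddAbove
    exact ⟨N, fun x hx => hN ⟨x, hx, rfl⟩⟩
  set f : Word → ℕ := fun q => if q ∈ C then 0 else N with hf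
  have hfix : ∀ c ∈ C, padFrom f [] c = c := fun c hc =>
    padFrom_eq_self f [] c fun q hq => by simp [hf, hC c hc q hq]
  have hpad := isInducedIso_pad C w f hfix
  obtain ⟨g, hg, hhg⟩ := hh.symm
  refine ⟨fun i => padFrom f [] (w i), ⟨_, hpad, ?_⟩, ⟨_, hpad.comp hg, ?_⟩⟩
  · rintro d - _ - ⟨t, rfl⟩ -
    have := length_le_padFrom f ([] ++ d) t
    simp only [padFrom_append, List.length_append]
    omega
  · intro d hd e he hde hne
    have hgde : g d <+: g e := (hg.2.1 d hd e he).1.1 hde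
    have hgne : g d ≠ g e := fun heq => hne (hg.1.injOn hd he heq)
    by_cases hc : g e ∈ C
    · have hcd := hC _ hc _ hgde
      -- `h` inverts `g` and fixes constants, so `d` and `e` are the constants `g d` and `g e`.
      have h1 : g e = e := (hh.2.2.1 _ hc).symm.trans (hhg e he)
      have h2 : g d = d := (hh.2.2.1 _ hcd).symm.trans (hhg d hd)
      rw [Function.comp_apply, Function.comp_apply, hfix _ hc, hfix _ hcd, h1, h2]
    · obtain ⟨t, ht⟩ := hgde
      have ht0 : t ≠ [] := by
        rintro rfl
        exact hgne (by simpa using ht)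
      have h1 := le_length_padFrom f ([] ++ g d) t ht0
      have h2 : f ([] ++ g d ++ t) = N := by simp [hf, ht, hc]
      have h3 := hN e he
      simp only [Function.comp_apply]
      rw [← ht, padFrom_append, List.length_append]
      omega

end CLTL
end

section
/- Let → be a type-invariant transition relation over a finite state set Q with initial states I ⊆ Q and final states F ⊆ Q. There exists an accepting run, i.e. an infinite run whose first configuration has a state in I and in which some state f ∈ F occurs in infinitely many configurations, if and only if there exist finite runs r₁ and r₂ such that r₁ starts in a configuration with state in I and ends in some configuration c whose state lies in F, and r₂ is a stretching loop starting in c. -/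
/-!
From right to left, a stretching loop is pumped by a single map of words. If `w ≼* v`, then the
induced isomorphism of maximal common ancestor trees extends to a map `φ` from *all* words to
words which fixes `ε` and the constants, preserves longest common prefixes and is an embedding
for the prefix and lexicographic orders (`Stretch.exists_treeEmb`). Such a map preserves the type
of every tuple, hence by type invariance it sends runs to runs. As `φ` sends the start of the loop
to its end, the loop `r` followed by `φ(r)`, `φ²(r)`, … is an infinite run
(`exists_infRun_of_loop`).

The extension `φ` is built letter by letter (`Stretchable.exists_treeEmb`): `φ(a w) = f(a) t_a
φ_a(w)`, where `f` is a strictly increasing function on `ℚ` interpolating the finitely many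
prescribed first letters and `φ_a` is obtained by induction for the subtree of words starting
with `a`. The stretching condition guarantees that a path of the source tree is never longer than
its image, so it can be mapped injectively letter by letter; the excess length of the image is
absorbed by the words `t_a` at the last letter before a node.

From left to right, a type is determined by finitely many truth values and `≼*` between tuples of
equal type compares finitely many natural numbers, the gaps between nodes. The pigeonhole
principle and Dickson's lemma yield two positions `i < j` with the given final state whose
configurations are related by `≼*` (`exists_stretch_pair`).
-/

namespace CLTL

/-! ### Longest common prefixes -/

theorem prefix_lcp_iff {α : Type*} [DecidableEq α] (p w v : List α) :
    p <+: lcp w v ↔ p <+: w ∧ p <+: v := by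
  induction w generalizing p v with
  | nil => simp [lcp]; rintro rfl; simp
  | cons a w ih =>
    cases v with
    | nil => simp [lcp]; rintro rfl; simp
    | cons b v =>
      cases p with
      | nil => simp
      | cons c p =>
        by_cases hab : a = b
        · subst hab
          simp only [lcp, if_true, List.cons_prefix_cons, ih]
          tauto
        · simp only [lcp, if_neg hab, List.cons_prefix_cons, List.prefix_nil]
          constructor
          · intro h; cases h
          · rintro ⟨⟨rfl, -⟩, rfl, -⟩; exact absurd rfl hab

theorem lcp_prefix_left {α : Type*} [DecidableEq α] (w v : List α) : lcp w v <+: w :=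
  ((prefix_lcp_iff _ _ _).1 List.prefix_rfl).1

theorem lcp_prefix_right {α : Type*} [DecidableEq α] (w v : List α) : lcp w v <+: v :=
  ((prefix_lcp_iff _ _ _).1 List.prefix_rfl).2

theorem prefix_antisymm {α : Type*} {w v : List α} (h₁ : w <+: v) (h₂ : v <+: w) : w = v :=
  h₁.eq_of_length (le_antisymm h₁.length_le h₂.length_le)

theorem lcp_self {α : Type*} [DecidableEq α] (w : List α) : lcp w w = w :=
  prefix_antisymm (lcp_prefix_left w w) ((prefix_lcp_iff _ _ _).2 ⟨List.prefix_rfl, List.prefix_rfl⟩)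

theorem prefix_iff_lcp_eq {α : Type*} [DecidableEq α] (w v : List α) :
    w <+: v ↔ lcp w v = w := by
  constructor
  · intro h
    exact prefix_antisymm (lcp_prefix_left w v) ((prefix_lcp_iff _ _ _).2 ⟨List.prefix_rfl, h⟩)
  · intro h
    rw [← h]; exact lcp_prefix_right w v

theorem lcp_append {α : Type*} [DecidableEq α] (t w v : List α) :
    lcp (t ++ w) (t ++ v) = t ++ lcp w v := by
  induction t with
  | nil => rfl
  | cons a t ih => simp [lcp, ih]

theorem lcp_cons {α : Type*} [DecidableEq α] (a : α) (w v : List α) :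
    lcp (a :: w) (a :: v) = a :: lcp w v := by simp [lcp]

theorem prefix_listLCP_iff (p : Word) (l : List Word) (hl : l ≠ []) :
    p <+: listLCP l ↔ ∀ x ∈ l, p <+: x := by
  induction l with
  | nil => exact absurd rfl hl
  | cons x xs ih =>
    cases xs with
    | nil => simp [listLCP]
    | cons y ys =>
      rw [listLCP, prefix_lcp_iff, ih (by simp)]
      · simp
      · simp

/-! ### The lexicographic order -/

theorem lexLe_cons_same {α : Type*} [LinearOrder α] (a : α) (w v : List α) :
    lexLe (a :: w) (a :: v) ↔ lexLe w v := by
  constructor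
  · rintro (h | ⟨p, c, d, hcd, h₁, h₂⟩)
    · exact Or.inl ((List.cons_prefix_cons.1 h).2)
    · cases p with
      | nil =>
        simp only [List.nil_append, List.cons_prefix_cons] at h₁ h₂
        exact absurd (h₁.1.trans h₂.1.symm) hcd.ne
      | cons e p =>
        simp only [List.cons_append, List.cons_prefix_cons] at h₁ h₂
        exact Or.inr ⟨p, c, d, hcd, h₁.2, h₂.2⟩
  · rintro (h | ⟨p, c, d, hcd, h₁, h₂⟩)
    · exact Or.inl (List.cons_prefix_cons.2 ⟨rfl, h⟩)
    · exact Or.inr ⟨a :: p, c, d, hcd, List.cons_prefix_cons.2 ⟨rfl, h₁⟩,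
        List.cons_prefix_cons.2 ⟨rfl, h₂⟩⟩

theorem lexLe_cons_ne {α : Type*} [LinearOrder α] {a b : α} (hab : a ≠ b) (w v : List α) :
    lexLe (a :: w) (b :: v) ↔ a < b := by
  constructor
  · rintro (h | ⟨p, c, d, hcd, h₁, h₂⟩)
    · exact absurd (List.cons_prefix_cons.1 h).1 hab
    · cases p with
      | nil =>
        simp only [List.nil_append, List.cons_prefix_cons] at h₁ h₂
        rw [← h₁.1, ← h₂.1]; exact hcd
      | cons e p =>
        simp only [List.cons_append, List.cons_prefix_cons] at h₁ h₂
        exact absurd (h₁.1.symm.trans h₂.1) hab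
  · intro h
    exact Or.inr ⟨[], a, b, h, by simp, by simp⟩

theorem lexLe_append {α : Type*} [LinearOrder α] (t w v : List α) :
    lexLe (t ++ w) (t ++ v) ↔ lexLe w v := by
  induction t with
  | nil => rfl
  | cons a t ih => rw [List.cons_append, List.cons_append, lexLe_cons_same, ih]

theorem lexLe_nil_right {α : Type*} [LinearOrder α] (w : List α) :
    lexLe w [] ↔ w = [] := by
  constructor
  · rintro (h | ⟨p, c, d, hcd, h₁, h₂⟩)
    · exact List.prefix_nil.1 h
    · simp at h₂
  · rintro rfl; exact Or.inl List.prefix_rfl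

theorem lexLe_nil_left {α : Type*} [LinearOrder α] (w : List α) : lexLe [] w :=
  Or.inl List.nil_prefix

/-! ### Tree embeddings of the set of all words -/

/-- An injective self-map of the set of words that fixes `ε`, preserves longest common prefixes,
and preserves and reflects the lexicographic order. It then also preserves and reflects the
prefix order. -/
structure TreeEmb (φ : Word → Word) : Prop where
  nil : φ [] = []
  inj : Function.Injective φ
  lcp : ∀ w v, φ (lcp w v) = lcp (φ w) (φ v)
  lex : ∀ w v, lexLe w v ↔ lexLe (φ w) (φ v)

theorem TreeEmb.prefix_iff {φ : Word → Word} (hφ : TreeEmb φ) (w v : Word) :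
    w <+: v ↔ φ w <+: φ v := by
  rw [prefix_iff_lcp_eq, prefix_iff_lcp_eq, ← hφ.lcp, hφ.inj.eq_iff]

theorem TreeEmb.listLCP {φ : Word → Word} (hφ : TreeEmb φ) (l : List Word) :
    φ (listLCP l) = listLCP (l.map φ) := by
  induction l with
  | nil => exact hφ.nil
  | cons x xs ih =>
    cases xs with
    | nil => rfl
    | cons y ys =>
      rw [show CLTL.listLCP (x :: y :: ys) = CLTL.lcp x (CLTL.listLCP (y :: ys)) from rfl,
        hφ.lcp, ih]
      rfl

theorem treeEmb_id : TreeEmb id :=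
  ⟨rfl, Function.injective_id, fun _ _ => rfl, fun _ _ => Iff.rfl⟩

/-- The map `ε ↦ ε`, `a w ↦ f(a) t_a g_a(w)`. -/
def glue (f : ℚ → ℚ) (t : ℚ → Word) (g : ℚ → Word → Word) : Word → Word
  | [] => []
  | a :: w => f a :: (t a ++ g a w)

/-- Distinct first letters are sent to distinct first letters in the same order, so words
branching at the root are handled by `f`, and the others by the maps `g a`. -/
theorem treeEmb_glue {f : ℚ → ℚ} (hf : StrictMono f) (t : ℚ → Word) {g : ℚ → Word → Word}
    (hg : ∀ a, TreeEmb (g a)) : TreeEmb (glue f t g) where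
  nil := rfl
  inj := by
    intro w v h
    cases w with
    | nil => cases v with
      | nil => rfl
      | cons b v => simp [glue] at h
    | cons a w => cases v with
      | nil => simp [glue] at h
      | cons b v =>
        simp only [glue, List.cons.injEq] at h
        obtain rfl := hf.injective h.1
        rw [(hg a).inj (List.append_cancel_left h.2)]
  lcp := by
    intro w v
    cases w with
    | nil => simp [glue, CLTL.lcp]
    | cons a w => cases v with
      | nil => simp [glue, CLTL.lcp]
      | cons b v =>
        by_cases hab : a = b
        · subst hab
          simp only [glue, lcp_cons, lcp_append, (hg a).lcp]
        · have : f a ≠ f b := hf.injective.ne hab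
          simp [glue, CLTL.lcp, hab, this]
  lex := by
    intro w v
    cases w with
    | nil => simp only [glue, lexLe_nil_left]
    | cons a w => cases v with
      | nil => simp [glue, lexLe_nil_right]
      | cons b v =>
        by_cases hab : a = b
        · subst hab
          simp only [glue, lexLe_cons_same, lexLe_append]
          exact (hg a).lex w v
        · simp only [glue, lexLe_cons_ne hab, lexLe_cons_ne (hf.injective.ne hab), hf.lt_iff_lt]

/-- Extension by linear interpolation, adding the points of `S` in increasing order. -/
theorem exists_strictMono_extension (b : ℚ → ℚ) (S : Finset ℚ) (hb : StrictMonoOn b S) :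
    ∃ f : ℚ → ℚ, StrictMono f ∧ ∀ a ∈ S, f a = b a := by
  induction S using Finset.induction_on_max with
  | empty => exact ⟨id, strictMono_id, by simp⟩
  | insert a S hS ih =>
    obtain ⟨f, hf, hfb⟩ := ih (hb.mono (by simp))
    rcases S.eq_empty_or_nonempty with rfl | hne
    · exact ⟨fun x => x + (b a - a), fun x y h => by simpa using h, by simp⟩
    · set c := S.max' hne with hc
      have hcS : c ∈ S := S.max'_mem hne
      have hca : c < a := hS c hcS
      have hlt : f c < b a := by
        rw [hfb c hcS]
        exact hb (by simp [hcS]) (by simp) hca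
      -- beyond the largest earlier point `c`, interpolate linearly towards `(a, b a)`
      have hs : 0 < (b a - f c) / (a - c) := div_pos (by linarith) (by linarith)
      refine ⟨fun x => if x ≤ c then f x else f c + (x - c) * ((b a - f c) / (a - c)), ?_, ?_⟩
      · intro x y hxy
        by_cases hy : y ≤ c
        · have hx : x ≤ c := hxy.le.trans hy
          simp only [hx, hy, if_true]; exact hf hxy
        · by_cases hx : x ≤ c
          · simp only [hx, hy, if_true, if_false]
            have := hf.monotone hx
            have : 0 < (y - c) * ((b a - f c) / (a - c)) :=
              mul_pos (by linarith [not_le.1 hy]) hs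
            linarith
          · simp only [hx, hy, if_false]
            have := mul_lt_mul_of_pos_right (show x - c < y - c by linarith) hs
            linarith
      · intro x hx
        rcases Finset.mem_insert.1 hx with rfl | hx
        · simp only [not_le.2 hca, if_false]
          have : x - c ≠ 0 := by linarith
          field_simp
          ring
        · have : x ≤ c := S.le_max' x hx
          simp only [this, if_true, hfb x hx]

/-! ### Extending a stretching isomorphism -/

/-- Conditions on finite families under which a tree embedding with `x i ↦ y i` exists: the
assignment `x i ⊓ x j ↦ y i ⊓ y j` sends `ε` to `ε`, never decreases distances along branches
(distances from the root included), and `x i ↦ y i` is lexicographically monotone. In `gap`,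
the case of equal nodes makes the assignment `x i ⊓ x j ↦ y i ⊓ y j` well defined on lengths. -/
structure Stretchable {ι : Type*} (x y : ι → Word) : Prop where
  zero : ∀ i j, lcp (x i) (x j) = [] → lcp (y i) (y j) = []
  le : ∀ i j, (lcp (x i) (x j)).length ≤ (lcp (y i) (y j)).length
  gap : ∀ i j k l, lcp (x i) (x j) <+: lcp (x k) (x l) →
    (lcp (x k) (x l)).length + (lcp (y i) (y j)).length ≤
      (lcp (y k) (y l)).length + (lcp (x i) (x j)).length
  lex : ∀ i j, lexLe (x i) (x j) → lexLe (y i) (y j)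

/-- Removing a common first letter `a` from the `x i`: the words `y i` share a first letter `b`,
and a further common part `t` has to be removed when some `x i ⊓ x j` is just `a`, so that
the images keep branching at the root. -/
theorem Stretchable.tail {ι : Type*} [Nonempty ι] {x y : ι → Word} (a : ℚ) (x' : ι → Word)
    (hx : ∀ i, x i = a :: x' i) (h : Stretchable x y) :
    ∃ (b : ℚ) (t : Word) (y' : ι → Word), (∀ i, y i = b :: (t ++ y' i)) ∧ Stretchable x' y' := by
  have hlx : ∀ i j, lcp (x i) (x j) = a :: lcp (x' i) (x' j) := by
    intro i j; rw [hx, hx, lcp_cons]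
  -- `u` is the common part `b :: t`
  obtain ⟨u, hu, hpre, hz, hle⟩ : ∃ u : Word, u ≠ [] ∧
      (∀ i, u <+: y i) ∧ (∀ i j, lcp (x' i) (x' j) = [] → lcp (y i) (y j) = u) ∧
      (∀ i j, (lcp (x' i) (x' j)).length + u.length ≤ (lcp (y i) (y j)).length) := by
    by_cases hex : ∃ i j, lcp (x' i) (x' j) = []
    · obtain ⟨i, j, hij⟩ := hex
      have hg : ∀ k l, (lcp (x' k) (x' l)).length + (lcp (y i) (y j)).length ≤
          (lcp (y k) (y l)).length := by
        intro k l
        have := h.gap i j k l (by rw [hlx, hlx, hij]; simp)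
        simp only [hlx, hij, List.length_cons, List.length_nil] at this
        omega
      have hpre : ∀ k, lcp (y i) (y j) <+: y k := by
        intro k
        have h₁ := hg i k
        exact (List.prefix_of_prefix_length_le (lcp_prefix_left _ _) (lcp_prefix_left _ _)
          (by omega)).trans (lcp_prefix_right (y i) (y k))
      refine ⟨lcp (y i) (y j), ?_, hpre, ?_, hg⟩
      · have := h.le i j
        rw [hlx] at this
        intro h0
        simp [h0] at this
      · intro k l hkl
        refine (List.IsPrefix.eq_of_length ?_ ?_).symm
        · exact (prefix_lcp_iff _ _ _).2 ⟨hpre k, hpre l⟩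
        · have h₁ := h.gap k l i j (by rw [hlx, hlx, hkl]; simp)
          have h₂ := hg k l
          simp only [hlx, hij, hkl, List.length_cons, List.length_nil] at h₁ h₂
          omega
    · obtain ⟨o⟩ := ‹Nonempty ι›
      have hle : ∀ i j, (lcp (x' i) (x' j)).length + 1 ≤ (lcp (y i) (y j)).length := by
        intro i j
        have := h.le i j
        rwa [hlx] at this
      have ho := hle o o
      rw [lcp_self (y o)] at ho
      have hl : ((y o).take 1).length = 1 := by rw [List.length_take]; omega
      refine ⟨(y o).take 1, ?_, ?_, ?_, ?_⟩
      · intro h0; simp [h0] at hl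
      · intro i
        have := hle o i
        exact (List.prefix_of_prefix_length_le (List.take_prefix _ _) (lcp_prefix_left _ _)
          (by omega)).trans (lcp_prefix_right (y o) (y i))
      · intro i j hij; exact absurd ⟨i, j, hij⟩ hex
      · intro i j; rw [hl]; exact hle i j
  obtain ⟨b, t, rfl⟩ := List.exists_cons_of_ne_nil hu
  choose y' hy' using hpre
  have hy : ∀ i, y i = (b :: t) ++ y' i := fun i => (hy' i).symm
  have hly : ∀ i j, lcp (y i) (y j) = (b :: t) ++ lcp (y' i) (y' j) := by
    intro i j; rw [hy, hy, lcp_append]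
  refine ⟨b, t, y', fun i => by rw [hy]; rfl, ?_, ?_, ?_, ?_⟩
  · intro i j hij
    have := hz i j hij
    rw [hly] at this
    exact List.append_right_eq_self.1 this
  · intro i j
    have := hle i j
    rw [hly, List.length_append] at this
    omega
  · intro i j k l hp
    have := h.gap i j k l (by rw [hlx, hlx]; exact List.cons_prefix_cons.2 ⟨rfl, hp⟩)
    simp only [hlx, hly, List.length_append, List.length_cons] at this
    omega
  · intro i j hl
    have := h.lex i j (by rw [hx, hx, lexLe_cons_same]; exact hl)
    rwa [hy, hy, lexLe_append] at this

/-- Induction on the length of the words `x i`, treating each first letter separately. -/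
theorem Stretchable.exists_treeEmb {ι : Type*} [Finite ι] {x y : ι → Word}
    (h : Stretchable x y) : ∃ φ, TreeEmb φ ∧ ∀ i, φ (x i) = y i := by
  obtain ⟨N, hN⟩ : ∃ N, ∀ i, (x i).length ≤ N := by
    obtain ⟨N, hN⟩ := (Set.finite_range fun i => (x i).length).bddAbove
    exact ⟨N, fun i => hN ⟨i, rfl⟩⟩
  have hnil : ∀ {κ : Type _} {x y : κ → Word}, Stretchable x y → ∀ i, x i = [] → y i = [] := by
    intro κ x y h i hi
    have := h.zero i i (by rw [lcp_self, hi])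
    rwa [lcp_self] at this
  induction N generalizing ι with
  | zero =>
    refine ⟨id, treeEmb_id, fun i => ?_⟩
    have hi : x i = [] := List.length_eq_zero_iff.1 (Nat.le_zero.1 (hN i))
    rw [hnil h i hi, hi]; rfl
  | succ N ih =>
    have key : ∀ a : ℚ, ∃ (b : ℚ) (t : Word) (g : Word → Word), TreeEmb g ∧
        ∀ i s, x i = a :: s → y i = b :: (t ++ g s) := by
      intro a
      rcases isEmpty_or_nonempty {i // ∃ s, x i = a :: s} with hE | hE
      · exact ⟨0, [], id, treeEmb_id, fun i s hs => (hE.false ⟨i, s, hs⟩).elim⟩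
      · choose x' hx' using fun i : {i // ∃ s, x i = a :: s} => i.2
        have hr : Stretchable (fun i : {i // ∃ s, x i = a :: s} => x i) (fun i => y i) :=
          ⟨fun i j => h.zero i j, fun i j => h.le i j, fun i j k l => h.gap i j k l,
            fun i j => h.lex i j⟩
        obtain ⟨b, t, y', hy', hs⟩ := hr.tail a x' hx'
        obtain ⟨g, hg, hgx⟩ := ih hs (fun i => by
          have := hN i
          rw [hx' i, List.length_cons] at this
          omega)
        refine ⟨b, t, g, hg, fun i s hs => ?_⟩
        have h₁ : a :: s = a :: x' ⟨i, s, hs⟩ := hs.symm.trans (hx' ⟨i, s, hs⟩)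
        rw [(List.cons.inj h₁).2, hgx]
        exact hy' ⟨i, s, hs⟩
    choose b t g hg hb using key
    have hfin : {a | ∃ i s, x i = a :: s}.Finite := by
      refine (Set.finite_range fun i => (x i).headD 0).subset ?_
      rintro a ⟨i, s, hs⟩
      exact ⟨i, by simp [hs]⟩
    obtain ⟨f, hf, hfb⟩ := exists_strictMono_extension b hfin.toFinset (by
      intro a₁ h₁ a₂ h₂ hlt
      simp only [Set.Finite.coe_toFinset, Set.mem_ofPred_eq] at h₁ h₂
      obtain ⟨i, s, hi⟩ := h₁
      obtain ⟨j, r, hj⟩ := h₂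
      have hz := h.zero i j (by rw [hi, hj]; simp [lcp, hlt.ne])
      have hl := h.lex i j (by rw [hi, hj, lexLe_cons_ne hlt.ne]; exact hlt)
      rw [hb _ _ _ hi, hb _ _ _ hj] at hz hl
      have hne : b a₁ ≠ b a₂ := by
        intro he
        rw [he, lcp_cons] at hz
        cases hz
      rwa [lexLe_cons_ne hne] at hl)
    refine ⟨glue f t g, treeEmb_glue hf t hg, fun i => ?_⟩
    rcases hi : x i with _ | ⟨a, s⟩
    · rw [hnil h i hi]; rfl
    · rw [hb _ _ _ hi, glue, hfb a (by simpa using ⟨i, s, hi⟩)]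

/-! ### Maximal common ancestor trees -/

/-- The entry of the maximal common ancestor tree belonging to an index set; the empty index
set yields `ε`. -/
noncomputable def node (C : List Word) {k : ℕ} (w : Fin k → Word)
    (I : Finset (Fin (k + C.length))) : Word :=
  listLCP (I.toList.map (Fin.append w C.get))

theorem MCAT_eq_range (C : List Word) {k : ℕ} (w : Fin k → Word) :
    MCAT C w = Set.range (node C w) := by
  ext z
  constructor
  · rintro (rfl | ⟨I, -, rfl⟩)
    · exact ⟨∅, by simp [node, listLCP]⟩
    · exact ⟨I, rfl⟩
  · rintro ⟨I, rfl⟩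
    rcases I.eq_empty_or_nonempty with rfl | hI
    · left; simp [node, listLCP]
    · right; exact ⟨I, hI, rfl⟩

theorem node_singleton (C : List Word) {k : ℕ} (w : Fin k → Word) (i : Fin (k + C.length)) :
    node C w {i} = Fin.append w C.get i := by
  simp [node, listLCP]

theorem node_pair (C : List Word) {k : ℕ} (w : Fin k → Word) (i j : Fin (k + C.length)) :
    node C w {i, j} = lcp (Fin.append w C.get i) (Fin.append w C.get j) := by
  have h : ∀ p, p <+: node C w {i, j} ↔
      p <+: lcp (Fin.append w C.get i) (Fin.append w C.get j) := by
    intro p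
    rw [node, prefix_listLCP_iff _ _ (by simp), prefix_lcp_iff]
    simp only [List.mem_map, Finset.mem_toList, Finset.mem_insert, Finset.mem_singleton]
    constructor
    · exact fun h => ⟨h _ ⟨i, Or.inl rfl, rfl⟩, h _ ⟨j, Or.inr rfl, rfl⟩⟩
    · rintro ⟨h₁, h₂⟩ _ ⟨m, rfl | rfl, rfl⟩
      exacts [h₁, h₂]
  exact prefix_antisymm ((h _).1 List.prefix_rfl) ((h _).2 List.prefix_rfl)

theorem append_comp_get {C : List Word} {k : ℕ} {w v : Fin k → Word} {φ : Word → Word}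
    (hφC : ∀ c ∈ C, φ c = c) (hφ : ∀ i, φ (w i) = v i) (i : Fin (k + C.length)) :
    φ (Fin.append w C.get i) = Fin.append v C.get i := by
  refine Fin.addCases (fun i => ?_) (fun i => ?_) i
  · simp [hφ]
  · simp only [Fin.append_right]
    exact hφC _ (List.get_mem _ _)

/-- A tree embedding fixing the constants preserves the type of every tuple. -/
theorem TreeEmb.isInducedIso {φ : Word → Word} (hφ : TreeEmb φ) {C : List Word}
    (hφC : ∀ c ∈ C, φ c = c) {k : ℕ} (w : Fin k → Word) :
    IsInducedIso C w (fun i => φ (w i)) φ := by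
  refine ⟨?_, fun x _ y _ => ⟨hφ.prefix_iff x y, hφ.lex x y⟩, hφC, fun _ => rfl⟩
  have hn : ∀ I, φ (node C w I) = node C (fun i => φ (w i)) I := by
    intro I
    rw [node, hφ.listLCP, List.map_map, node]
    congr 1
    exact List.map_congr_left fun i _ => append_comp_get hφC (fun _ => rfl) i
  rw [MCAT_eq_range, MCAT_eq_range]
  refine ⟨?_, hφ.inj.injOn, ?_⟩
  · rintro _ ⟨I, rfl⟩; exact ⟨I, (hn I).symm⟩
  · rintro _ ⟨I, rfl⟩; exact ⟨_, ⟨I, rfl⟩, hn I⟩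

/-- A stretching isomorphism between maximal common ancestor trees extends to a tree embedding
of the set of all words. -/
theorem Stretch.exists_treeEmb {C : List Word} {k : ℕ} {w v : Fin k → Word}
    (h : Stretch C w v) :
    ∃ φ, TreeEmb φ ∧ (∀ c ∈ C, φ c = c) ∧ ∀ i, φ (w i) = v i := by
  obtain ⟨h, ⟨hbij, hord, hhC, hhw⟩, hst⟩ := h
  have hent := append_comp_get hhC hhw
  have hmem : ∀ {u : Fin k → Word} I, node C u I ∈ MCAT C u := by
    intro u I; rw [MCAT_eq_range]; exact ⟨I, rfl⟩
  have hlm : ∀ (u : Fin k → Word) i j,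
      lcp (Fin.append u C.get i) (Fin.append u C.get j) ∈ MCAT C u := by
    intro u i j; rw [← node_pair]; exact hmem _
  have hem : ∀ (u : Fin k → Word) i, Fin.append u C.get i ∈ MCAT C u := by
    intro u i; rw [← node_singleton]; exact hmem _
  have hnm : ∀ u : Fin k → Word, [] ∈ MCAT C u := fun u => Or.inl rfl
  have hnil : h [] = [] := by
    obtain ⟨d, hd, hd0⟩ := hbij.surjOn (hnm v)
    have := ((hord [] (hnm w) d hd).1).1 List.nil_prefix
    rw [hd0] at this
    exact List.prefix_nil.1 this
  -- `h` preserves meets because it is an isomorphism of prefix orders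
  have hlcp : ∀ i j, h (lcp (Fin.append w C.get i) (Fin.append w C.get j)) =
      lcp (Fin.append v C.get i) (Fin.append v C.get j) := by
    intro i j
    apply prefix_antisymm
    · rw [prefix_lcp_iff, ← hent, ← hent]
      exact ⟨(hord _ (hlm w i j) _ (hem w i)).1.1 (lcp_prefix_left _ _),
        (hord _ (hlm w i j) _ (hem w j)).1.1 (lcp_prefix_right _ _)⟩
    · obtain ⟨d, hd, hdv⟩ := hbij.surjOn (hlm v i j)
      rw [← hdv, ← (hord _ hd _ (hlm w i j)).1, prefix_lcp_iff,
        (hord _ hd _ (hem w i)).1, (hord _ hd _ (hem w j)).1, hdv, hent, hent]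
      exact ⟨lcp_prefix_left _ _, lcp_prefix_right _ _⟩
  have hgap : ∀ d ∈ MCAT C w, ∀ e ∈ MCAT C w, d <+: e →
      e.length + (h d).length ≤ (h e).length + d.length := by
    intro d hd e he hde
    by_cases hne : d = e
    · subst hne; omega
    · exact hst d hd e he hde hne
  have hs : Stretchable (Fin.append w C.get) (Fin.append v C.get) := by
    refine ⟨?_, ?_, ?_, ?_⟩
    · intro i j hij
      rw [← hlcp, hij, hnil]
    · intro i j
      have := hgap [] (hnm w) _ (hlm w i j) List.nil_prefix
      rw [hnil, hlcp] at this
      simpa using this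
    · intro i j k l hp
      have := hgap _ (hlm w i j) _ (hlm w k l) hp
      rwa [hlcp, hlcp] at this
    · intro i j hl
      have := (hord _ (hem w i) _ (hem w j)).2.1 hl
      rwa [hent, hent] at this
  obtain ⟨φ, hφ, hφx⟩ := hs.exists_treeEmb
  refine ⟨φ, hφ, fun c hc => ?_, fun i => ?_⟩
  · obtain ⟨i, rfl⟩ := List.get_of_mem hc
    simpa using hφx (Fin.natAdd k i)
  · simpa using hφx (Fin.castAdd C.length i)

/-! ### Pumping a stretching loop -/

/-- The action of a map of words on configurations. -/
def mapConfig {Q : Type*} {n : ℕ} (φ : Word → Word) (c : Q × (Fin n → Word)) :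
    Q × (Fin n → Word) :=
  (c.1, fun i => φ (c.2 i))

theorem step_mapConfig {C : List Word} {Q : Type*} {n : ℕ}
    {step : (Q × (Fin n → Word)) → (Q × (Fin n → Word)) → Prop}
    (hstep : TypeInvariant C step) {φ : Word → Word} (hφ : TreeEmb φ)
    (hφC : ∀ c ∈ C, φ c = c) {c d : Q × (Fin n → Word)} (h : step c d) :
    step (mapConfig φ c) (mapConfig φ d) := by
  refine hstep c.1 d.1 c.2 d.2 _ _ h ⟨φ, ?_⟩
  convert hφ.isInducedIso hφC (Fin.append c.2 d.2) using 1
  funext i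
  refine Fin.addCases (fun i => ?_) (fun i => ?_) i
  · simp only [Fin.append_left]
  · simp only [Fin.append_right]

/-- Following a finite loop and then its images under the iterates of `φ`. -/
theorem exists_infRun_of_loop {C : List Word} {Q : Type*} {n : ℕ}
    {step : (Q × (Fin n → Word)) → (Q × (Fin n → Word)) → Prop}
    (hstep : TypeInvariant C step) {N : ℕ} (hN : 0 < N)
    {r : Fin (N + 1) → Q × (Fin n → Word)} (hr : IsFinRun step r)
    (hle : ConfigLe C (r 0) (r (Fin.last N))) :
    ∃ σ : ℕ → Q × (Fin n → Word), IsInfRun step σ ∧ σ 0 = r 0 ∧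
      ∀ m, (σ (N * m)).1 = (r 0).1 := by
  obtain ⟨hq, hst⟩ := hle
  obtain ⟨φ, hφ, hφC, hφw⟩ := hst.exists_treeEmb
  have hlast : mapConfig φ (r 0) = r (Fin.last N) := Prod.ext hq (funext hφw)
  have hiter : ∀ m {c d}, step c d → step ((mapConfig φ)^[m] c) ((mapConfig φ)^[m] d) := by
    intro m
    induction m with
    | zero => intro c d h; exact h
    | succ m ih =>
      intro c d h
      rw [Function.iterate_succ_apply, Function.iterate_succ_apply]
      exact ih (step_mapConfig hstep hφ hφC h)
  have hfst : ∀ m (c : Q × (Fin n → Word)), ((mapConfig φ)^[m] c).1 = c.1 := by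
    intro m
    induction m with
    | zero => intro c; rfl
    | succ m ih => intro c; rw [Function.iterate_succ_apply, ih]; rfl
  have hmod : ∀ j, j % N < N + 1 := fun j => (Nat.mod_lt j hN).trans (Nat.lt_succ_self N)
  refine ⟨fun j => (mapConfig φ)^[j / N] (r ⟨j % N, hmod j⟩), ?_, ?_, ?_⟩
  · intro j
    have hs := hiter (j / N) (hr ⟨j % N, Nat.mod_lt j hN⟩)
    by_cases hj : j % N + 1 = N
    · have hd := Nat.div_add_mod j N
      have e : j + 1 = N * (j / N + 1) := by rw [mul_add]; omega
      have h₁ : (j + 1) / N = j / N + 1 := by rw [e, Nat.mul_div_cancel_left _ hN]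
      have h₂ : (j + 1) % N = 0 := by rw [e, Nat.mul_mod_right]
      convert hs using 1
      · rfl
      dsimp only
      have e0 : (⟨(j + 1) % N, hmod (j + 1)⟩ : Fin (N + 1)) = 0 := Fin.ext (by simp [h₂])
      rw [e0, h₁, Function.iterate_succ_apply, hlast]
      congr 2
      exact Fin.ext (by simp [hj])
    · have hlt : j % N + 1 < N := by have := Nat.mod_lt j hN; omega
      have hd := Nat.div_add_mod j N
      have h₁ : (j + 1) / N = j / N := by
        rw [← hd, add_assoc, Nat.mul_add_div hN, Nat.mul_add_div hN, Nat.div_eq_of_lt hlt,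
          Nat.div_eq_of_lt (Nat.mod_lt j hN)]
      have h₂ : (j + 1) % N = j % N + 1 := by
        conv_lhs => rw [← hd, add_assoc, Nat.mul_add_mod, Nat.mod_eq_of_lt hlt]
      convert hs using 1
      · rfl
      dsimp only
      rw [h₁]
      congr 2
      exact Fin.ext (by simp [h₂])
  · have e0 : (⟨0 % N, hmod 0⟩ : Fin (N + 1)) = 0 := Fin.ext (by simp)
    simp only [e0, Nat.zero_div, Function.iterate_zero, id]
  · intro m
    have e0 : (⟨N * m % N, hmod (N * m)⟩ : Fin (N + 1)) = 0 := Fin.ext (by simp)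
    simp only [e0]
    exact hfst _ _

/-! ### Stretching pairs in infinite sequences -/

/-- The type of a tuple, recorded as the two orders on the nodes of its maximal common ancestor
tree, each node being named by all index sets producing it. -/
def typeCode (C : List Word) {k : ℕ} (w : Fin k → Word) :
    Finset (Fin (k + C.length)) → Finset (Fin (k + C.length)) → Prop × Prop :=
  fun I J => (node C w I <+: node C w J, lexLe (node C w I) (node C w J))

/-- Truncated differences of the lengths of the nodes. -/
noncomputable def gapCode (C : List Word) {k : ℕ} (w : Fin k → Word) :
    Finset (Fin (k + C.length)) → Finset (Fin (k + C.length)) → ℕ :=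
  fun I J => (node C w J).length - (node C w I).length

theorem stretch_of_codes {C : List Word} {k : ℕ} {w v : Fin k → Word}
    (ht : typeCode C w = typeCode C v) (hg : gapCode C w ≤ gapCode C v) : Stretch C w v := by
  have hp : ∀ I J, node C w I <+: node C w J ↔ node C v I <+: node C v J := fun I J =>
    iff_of_eq (congrArg Prod.fst (congrFun (congrFun ht I) J))
  have hl : ∀ I J, lexLe (node C w I) (node C w J) ↔ lexLe (node C v I) (node C v J) :=
    fun I J => iff_of_eq (congrArg Prod.snd (congrFun (congrFun ht I) J))
  have heq : ∀ I J, node C w I = node C w J ↔ node C v I = node C v J := by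
    intro I J
    constructor
    · intro h
      exact prefix_antisymm ((hp I J).1 (h ▸ List.prefix_rfl)) ((hp J I).1 (h ▸ List.prefix_rfl))
    · intro h
      exact prefix_antisymm ((hp I J).2 (h ▸ List.prefix_rfl)) ((hp J I).2 (h ▸ List.prefix_rfl))
  obtain ⟨h, hh⟩ : ∃ h : Word → Word, ∀ I, h (node C w I) = node C v I :=
    ⟨Function.extend (node C w) (node C v) id, fun I =>
      Function.FactorsThrough.extend_apply (fun I J hIJ => (heq I J).1 hIJ) id I⟩
  have hent : ∀ i, h (Fin.append w C.get i) = Fin.append v C.get i := by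
    intro i; rw [← node_singleton, hh, node_singleton]
  refine ⟨h, ⟨?_, ?_, ?_, ?_⟩, ?_⟩
  · rw [MCAT_eq_range, MCAT_eq_range]
    refine ⟨?_, ?_, ?_⟩
    · rintro _ ⟨I, rfl⟩; exact ⟨I, (hh I).symm⟩
    · rintro _ ⟨I, rfl⟩ _ ⟨J, rfl⟩ hIJ
      rw [hh, hh] at hIJ
      exact (heq I J).2 hIJ
    · rintro _ ⟨I, rfl⟩; exact ⟨_, ⟨I, rfl⟩, hh I⟩
  · rw [MCAT_eq_range]
    rintro _ ⟨I, rfl⟩ _ ⟨J, rfl⟩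
    rw [hh, hh]
    exact ⟨hp I J, hl I J⟩
  · intro c hc
    obtain ⟨i, rfl⟩ := List.get_of_mem hc
    simpa using hent (Fin.natAdd k i)
  · intro i
    simpa using hent (Fin.castAdd C.length i)
  · intro d hd e he hde hne
    rw [MCAT_eq_range] at hd he
    obtain ⟨I, rfl⟩ := hd
    obtain ⟨J, rfl⟩ := he
    have h₁ : (node C w I).length < (node C w J).length :=
      lt_of_le_of_ne hde.length_le fun hlen => hne (hde.eq_of_length hlen)
    have h₂ := hg I J
    simp only [gapCode] at h₂
    rw [hh, hh]
    omega

/-- Finitely many types, and Dickson's lemma for the gaps. -/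
theorem exists_stretch_pair (C : List Word) {k : ℕ} (w : ℕ → Fin k → Word) :
    ∃ i j, i < j ∧ Stretch C (w i) (w j) := by
  obtain ⟨τ, hτ⟩ := Finite.exists_infinite_fiber fun i => typeCode C (w i)
  have hinf : Set.Infinite {i | typeCode C (w i) = τ} := Set.infinite_coe_iff.1 hτ
  obtain ⟨s, hs, hsτ⟩ : ∃ s : ℕ → ℕ, StrictMono s ∧ ∀ m, typeCode C (w (s m)) = τ :=
    ⟨Nat.nth _, Nat.nth_strictMono hinf, fun m => Nat.nth_mem_of_infinite hinf m⟩
  obtain ⟨i, j, hij, hle⟩ := wellQuasiOrdered_le fun m => gapCode C (w (s m))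
  exact ⟨s i, s j, hs hij, stretch_of_codes ((hsτ i).trans (hsτ j).symm) hle⟩

/-- A type-invariant transition system has an accepting run if and only if there is a
finite run from an initial configuration to a configuration `c` with final state together
with a stretching loop starting in `c`. -/
theorem stmt7 (C : List Word) (hC : ∀ c ∈ C, ∀ c' : Word, c' <+: c → c' ∈ C)
    {Q : Type*} [Fintype Q] {n : ℕ}
    (step : (Q × (Fin n → Word)) → (Q × (Fin n → Word)) → Prop)
    (hstep : TypeInvariant C step) (I F : Set Q) :
    (∃ ρ : ℕ → Q × (Fin n → Word), IsInfRun step ρ ∧ (ρ 0).1 ∈ I ∧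
        ∃ f ∈ F, ∀ k : ℕ, ∃ j ≥ k, (ρ j).1 = f) ↔
    (∃ (N₁ : ℕ) (r₁ : Fin (N₁ + 1) → Q × (Fin n → Word))
       (N₂ : ℕ) (r₂ : Fin (N₂ + 1) → Q × (Fin n → Word)),
        IsFinRun step r₁ ∧ (r₁ 0).1 ∈ I ∧ (r₁ (Fin.last N₁)).1 ∈ F ∧
        0 < N₂ ∧ IsFinRun step r₂ ∧ r₂ 0 = r₁ (Fin.last N₁) ∧
        ConfigLe C (r₂ 0) (r₂ (Fin.last N₂))) := by
  constructor
  · rintro ⟨ρ, hρ, hI, f, hf, hinf⟩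
    obtain ⟨s, hs, hsf⟩ : ∃ s : ℕ → ℕ, StrictMono s ∧ ∀ m, (ρ (s m)).1 = f := by
      have hinf' : Set.Infinite {j | (ρ j).1 = f} := by
        rw [Set.infinite_iff_exists_gt]
        intro k
        obtain ⟨j, hj, hjf⟩ := hinf (k + 1)
        exact ⟨j, hjf, hj⟩
      exact ⟨Nat.nth _, Nat.nth_strictMono hinf', fun m => Nat.nth_mem_of_infinite hinf' m⟩
    obtain ⟨i, j, hij, hst⟩ := exists_stretch_pair C fun m => (ρ (s m)).2
    have hlt : s i < s j := hs hij
    refine ⟨s i, fun m => ρ m, s j - s i, fun m => ρ (s i + m), ?_, hI, ?_, by omega, ?_, ?_, ?_⟩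
    · intro m; exact hρ m
    · change (ρ (s i)).1 ∈ F
      rw [hsf]; exact hf
    · intro m; exact hρ (s i + m)
    · rfl
    · have e : s i + (s j - s i) = s j := by omega
      change ConfigLe C (ρ (s i)) (ρ (s i + (s j - s i)))
      rw [e]
      exact ⟨(hsf i).trans (hsf j).symm, hst⟩
  · rintro ⟨N₁, r₁, N₂, r₂, hr₁, hI, hF, hN₂, hr₂, heq, hle⟩
    obtain ⟨σ, hσ, hσ0, hσq⟩ := exists_infRun_of_loop hstep hN₂ hr₂ hle
    refine ⟨fun i => if h : i < N₁ then r₁ ⟨i, by omega⟩ else σ (i - N₁), ?_, ?_,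
      (r₁ (Fin.last N₁)).1, hF, ?_⟩
    · intro i
      dsimp only
      by_cases hi : i < N₁
      · have hs := hr₁ ⟨i, hi⟩
        by_cases hi' : i + 1 < N₁
        · rw [dif_pos hi, dif_pos hi']; exact hs
        · rw [dif_pos hi, dif_neg hi', show i + 1 - N₁ = 0 by omega, hσ0, heq]
          have e : Fin.last N₁ = (⟨i, hi⟩ : Fin N₁).succ :=
            Fin.ext (by simp only [Fin.val_last, Fin.val_succ]; omega)
          rw [e]; exact hs
      · rw [dif_neg hi, dif_neg (by omega), show i + 1 - N₁ = i - N₁ + 1 by omega]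
        exact hσ _
    · dsimp only
      split_ifs with h
      · exact hI
      · have : N₁ = 0 := by omega
        subst this
        rw [Nat.zero_sub, hσ0, heq]
        exact hI
    · intro k
      have hk : k ≤ N₂ * k := Nat.le_mul_of_pos_left k hN₂
      refine ⟨N₁ + N₂ * k, by omega, ?_⟩
      dsimp only
      rw [dif_neg (by omega), Nat.add_sub_cancel_left, hσq, heq]

end CLTL
end
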